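/- Let (z_k)_{k≥1} be a sequence in ℂ with |z_k| > 1 for all k and Σ_k (|z_k| − 1) < ∞, let (μ_k) be positive reals with Σ_k μ_k < ∞, and let μ = m + Σ_k μ_k δ_{z_k} (i.e. weight w ≡ 1 on the circle). Then liminf_{n→∞} η_n ≥ ∏_k |z_k|^{−1}. -/

import Mathlib

open MeasureTheory Filter Finset

/-- Normalized arc-length (Haar) measure on the unit circle, viewed as a measure on `ℂ`. -/
noncomputable def haarCircle : Measure ℂ :=
  ((ENNReal.ofReal (2 * Real.pi))⁻¹ • volume.restrict (Set.Ioc (0 : ℝ) (2 * Real.pi))).map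
    (fun θ : ℝ => Complex.exp (θ * Complex.I))

/-- `η_n`: the supremum of `|c_n|` over Laurent polynomials
`R(z) = Σ_{j=-(n-1)}^{n} c_j z^j` with `∫ |R|² dμ ≤ 1`. -/
noncomputable def etaSeq (μ : Measure ℂ) (n : ℕ) : ℝ :=
  sSup { x : ℝ | ∃ c : ℤ → ℂ,
    (∫ z : ℂ, ‖∑ j ∈ Finset.Icc (-(n : ℤ) + 1) (n : ℤ), c j * z ^ j‖ ^ 2 ∂μ) ≤ 1 ∧
    x = ‖c (n : ℤ)‖ }

noncomputable def pinv (α : ℂ) : PowerSeries ℂ := PowerSeries.mk (fun j => (starRingEnd ℂ α)^j)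
noncomputable def fac (α : ℂ) : PowerSeries ℂ := (PowerSeries.C α - PowerSeries.X) * pinv α

lemma pinv_spec (α : ℂ) (f : PowerSeries ℂ) :
    (1 - PowerSeries.C (starRingEnd ℂ α) * PowerSeries.X) * (pinv α * f) = f := by
  have h : (1 - PowerSeries.C (starRingEnd ℂ α) * PowerSeries.X) * pinv α = 1 := by
    ext j
    cases j with
    | zero => simp [sub_mul, pinv, mul_assoc]
    | succ j =>
      simp [sub_mul, pinv, mul_assoc, PowerSeries.coeff_succ_X_mul, PowerSeries.coeff_one, pow_succ']
  rw [← mul_assoc, h, one_mul]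

lemma fac_sum (α : ℂ) (u : PowerSeries ℂ) (J : ℕ) :
    ∑ j ∈ range (J+1), ‖PowerSeries.coeff j ((PowerSeries.C α - PowerSeries.X) * u)‖^2
    = ∑ j ∈ range (J+1), ‖PowerSeries.coeff j
        ((1 - PowerSeries.C (starRingEnd ℂ α) * PowerSeries.X) * u)‖^2
      - (1 - ‖α‖^2) * ‖PowerSeries.coeff J u‖^2 := by
  induction J with
  | zero => simp [sub_mul, mul_assoc]; ring
  | succ J ih =>
    rw [sum_range_succ, ih, sum_range_succ _ (J+1)]
    simp only [sub_mul, mul_assoc, map_sub, PowerSeries.coeff_C_mul, PowerSeries.coeff_succ_X_mul,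
      one_mul]
    generalize PowerSeries.coeff J u = p
    generalize PowerSeries.coeff (J+1) u = q
    simp only [Complex.sq_norm, Complex.normSq_apply, Complex.sub_re, Complex.sub_im,
      Complex.mul_re, Complex.mul_im, Complex.conj_re, Complex.conj_im]
    ring

lemma fac_tel (α : ℂ) (u : PowerSeries ℂ) (J : ℕ) :
    ∑ j ∈ range (J+1), α^j * PowerSeries.coeff j ((PowerSeries.C α - PowerSeries.X) * u)
    = α^(J+1) * PowerSeries.coeff J u := by
  induction J with
  | zero => simp [sub_mul]
  | succ J ih =>
    rw [sum_range_succ, ih]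
    simp only [sub_mul, map_sub, PowerSeries.coeff_C_mul, PowerSeries.coeff_succ_X_mul]
    ring

def Contr (b : PowerSeries ℂ) : Prop := ∀ (f : PowerSeries ℂ) (J : ℕ),
  ∑ j ∈ range J, ‖PowerSeries.coeff j (b * f)‖^2 ≤ ∑ j ∈ range J, ‖PowerSeries.coeff j f‖^2

lemma fac_contr (α : ℂ) (h : ‖α‖ < 1) : Contr (fac α) := by
  intro f J
  cases J with
  | zero => simp
  | succ J =>
    have := fac_sum α (pinv α * f) J
    rw [pinv_spec] at this
    rw [fac, mul_assoc, this]
    have : ‖α‖^2 ≤ 1 := by nlinarith [norm_nonneg α]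
    nlinarith [sq_nonneg ‖PowerSeries.coeff J (pinv α * f)‖]

lemma prod_contr (w : ℕ → ℂ) (hw : ∀ k, ‖w k‖ < 1) (S : Finset ℕ) :
    Contr (∏ k ∈ S, fac (w k)) := by
  classical
  induction S using Finset.induction_on with
  | empty => intro f J; simp
  | insert a S ha ih =>
    intro f J
    rw [prod_insert ha, mul_assoc]
    exact (fac_contr _ (hw a) _ _).trans (ih _ _)

noncomputable def lam (n i : ℕ) : ℝ := (#{c ∈ range n | i + c < 2 * n} : ℝ) / n

noncomputable def Vp (b : PowerSeries ℂ) (n : ℕ) (ζ : ℂ) : ℂ :=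
  ∑ i ∈ range (2*n), (lam n i : ℂ) * PowerSeries.coeff i b * ζ^i

noncomputable def xs (n : ℕ) (w : ℂ) : PowerSeries ℂ :=
  PowerSeries.mk (fun c => if c < n then (w⁻¹)^c else 0)

lemma lam_nonneg (n i : ℕ) : 0 ≤ lam n i := by unfold lam; positivity
lemma lam_le (n i : ℕ) : lam n i ≤ 1 := by
  unfold lam
  apply div_le_one_of_le₀ _ (by positivity)
  exact_mod_cast (card_filter_le _ _).trans (by simp)
lemma lam_zero (n : ℕ) (hn : 1 ≤ n) : lam n 0 = 1 := by
  unfold lam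
  rw [filter_true_of_mem (by intro x hx; simp at hx; omega)]
  have : (n:ℝ) ≠ 0 := by positivity
  simp [this]

lemma V_eq (b : PowerSeries ℂ) (n : ℕ) (hn : 1 ≤ n) (w : ℂ) (hw : w ≠ 0) :
    (n : ℂ) * Vp b n w = ∑ a ∈ range (2*n), w^a * PowerSeries.coeff a (b * xs n w) := by
  have hn' : (n:ℂ) ≠ 0 := by exact_mod_cast (by omega : n ≠ 0)
  have h1 : ∀ a ∈ range (2*n), w^a * PowerSeries.coeff a (b * xs n w)
      = ∑ i ∈ range (2*n), ∑ c ∈ range n, if i + c = a then PowerSeries.coeff i b * w^i else 0 := by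
    intro a ha
    simp only [mem_range] at ha
    rw [PowerSeries.coeff_mul, mul_sum, ← sum_product', ← sum_filter]
    symm
    have hsub : {p ∈ range (2*n) ×ˢ range n | p.1 + p.2 = a} ⊆ antidiagonal a := by
      intro p hp
      simp only [mem_filter, mem_product, mem_range] at hp
      simpa using hp.2
    rw [← sum_subset hsub]
    · apply sum_congr rfl
      rintro ⟨i, c⟩ hp
      simp only [mem_filter, mem_product, mem_range] at hp
      obtain ⟨⟨h1, h2⟩, rfl⟩ := hp
      simp [xs, h2, pow_add]
      field_simp
    · rintro ⟨i, c⟩ hp hp'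
      simp only [mem_filter, mem_product, mem_range, HasAntidiagonal.mem_antidiagonal] at hp hp'
      have : ¬ c < n := by intro h; exact hp' ⟨⟨by omega, h⟩, hp⟩
      simp [xs, this]
  rw [sum_congr rfl h1, sum_comm, Vp, mul_sum]
  apply sum_congr rfl
  intro i hi
  rw [sum_comm]
  simp only [sum_ite_eq, mem_range]
  rw [← sum_filter, sum_const, lam]
  push_cast
  rw [nsmul_eq_mul]
  field_simp

lemma xs_norm (n : ℕ) (w : ℂ) (hw0 : w ≠ 0) (hw : ‖w‖ < 1) (J : ℕ) :
    ∑ j ∈ range J, ‖PowerSeries.coeff j (xs n w)‖^2 ≤ n * (‖w‖⁻¹)^(2*n) := by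
  have h0 : 0 < ‖w‖ := norm_pos_iff.2 hw0
  have h1 : 1 ≤ ‖w‖⁻¹ := (one_le_inv₀ h0).2 hw.le
  have h2 : ∀ j ∈ range J, ‖PowerSeries.coeff j (xs n w)‖^2 ≤
      if j < n then (‖w‖⁻¹)^(2*n) else 0 := by
    intro j _
    by_cases h : j < n
    · simp only [xs, PowerSeries.coeff_mk, h, if_true, norm_pow, norm_inv]
      rw [← pow_mul]
      exact pow_le_pow_right₀ h1 (by omega)
    · simp [xs, h]
  refine (sum_le_sum h2).trans ?_
  rw [← sum_filter, sum_const, nsmul_eq_mul]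
  gcongr
  calc #{a ∈ range J | a < n} ≤ #(range n) := card_le_card (by intro x; simp)
    _ = n := by simp

lemma V_bound1 (b : PowerSeries ℂ) (hb : Contr b) (n : ℕ) (hn : 1 ≤ n) (w : ℂ) (hw0 : w ≠ 0)
    (hw : ‖w‖ < 1) : ‖Vp b n w‖^2 ≤ 2 * (‖w‖⁻¹)^(2*n) := by
  have hn0 : (0:ℝ) < n := by exact_mod_cast hn
  have h := V_eq b n hn w hw0
  have h1 : ‖(n:ℂ) * Vp b n w‖ ≤ ∑ a ∈ range (2*n), 1 * ‖PowerSeries.coeff a (b * xs n w)‖ := by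
    rw [h]
    refine (norm_sum_le _ _).trans (sum_le_sum fun a _ => ?_)
    rw [norm_mul, norm_pow]
    gcongr
    exact pow_le_one₀ (norm_nonneg _) hw.le
  have h2 := sum_mul_sq_le_sq_mul_sq (range (2*n)) (fun _ => (1:ℝ))
    (fun a => ‖PowerSeries.coeff a (b * xs n w)‖)
  have h3 := (hb (xs n w) (2*n)).trans (xs_norm n w hw0 hw (2*n))
  have h4 : ‖(n:ℂ) * Vp b n w‖^2 ≤ (2*n) * (n * (‖w‖⁻¹)^(2*n)) := by
    refine (pow_le_pow_left₀ (norm_nonneg _) h1 2).trans (h2.trans ?_)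
    simp only [one_pow, sum_const, card_range, nsmul_eq_mul, mul_one]
    push_cast
    gcongr
  rw [norm_mul, Complex.norm_natCast, mul_pow] at h4
  have : (0:ℝ) < n^2 := by positivity
  refine le_of_mul_le_mul_left (h4.trans (le_of_eq (by ring))) this

lemma V_bound2 (w : ℂ) (b b' : PowerSeries ℂ) (hb : b = fac w * b') (hb' : Contr b') (n : ℕ)
    (hn : 1 ≤ n) (hw0 : w ≠ 0) (hw : ‖w‖ < 1) :
    (‖w‖⁻¹)^(2*n) * ‖Vp b n w‖^2 ≤ 1 / (n * (1 - ‖w‖^2)) := by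
  have hn0 : (0:ℝ) < n := by exact_mod_cast hn
  have h0 : 0 < ‖w‖ := norm_pos_iff.2 hw0
  have hd : 0 < 1 - ‖w‖^2 := by nlinarith
  have h := V_eq b n hn w hw0
  obtain ⟨J, hJ⟩ : ∃ J, 2*n = J+1 := ⟨2*n-1, by omega⟩
  have e : b * xs n w = (PowerSeries.C w - PowerSeries.X) * (pinv w * (b' * xs n w)) := by
    rw [hb, fac]; ring
  rw [e, hJ, fac_tel] at h
  have h2 := fac_sum w (pinv w * (b' * xs n w)) J
  rw [pinv_spec] at h2
  set U := PowerSeries.coeff J (pinv w * (b' * xs n w))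
  have h3 := (hb' (xs n w) (J+1)).trans (xs_norm n w hw0 hw (J+1))
  have h4 : 0 ≤ ∑ j ∈ range (J+1), ‖PowerSeries.coeff j ((PowerSeries.C w - PowerSeries.X) * (pinv w * (b' * xs n w)))‖^2 := by positivity
  have h5 : (1 - ‖w‖^2) * ‖U‖^2 ≤ n * (‖w‖⁻¹)^(2*n) := by linarith
  have h6 : (n:ℝ)^2 * ‖Vp b n w‖^2 = (‖w‖^(2*n))^2 * ‖U‖^2 := by
    have := congrArg (fun t => ‖t‖^2) h
    simpa [mul_pow, hJ] using this
  rw [le_div_iff₀ (by positivity)]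
  rw [inv_pow] at h5 ⊢
  set q := ‖w‖^(2*n) with hq
  have hq0 : 0 < q := by positivity
  have h7 : (n:ℝ) * (q⁻¹ * ‖Vp b n w‖^2 * (n * (1 - ‖w‖^2))) ≤ n * 1 := by
    calc (n:ℝ) * (q⁻¹ * ‖Vp b n w‖^2 * (n * (1 - ‖w‖^2)))
        = q⁻¹ * ((n:ℝ)^2 * ‖Vp b n w‖^2) * (1 - ‖w‖^2) := by ring
      _ = q * ((1 - ‖w‖^2) * ‖U‖^2) := by rw [h6]; field_simp
      _ ≤ q * (n * q⁻¹) := by gcongr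
      _ = n * 1 := by field_simp
  exact le_of_mul_le_mul_left h7 hn0

lemma V_bound3 (w : ℂ) (b b' : PowerSeries ℂ) (hb : b = fac w * b') (hb' : Contr b') (n : ℕ)
    (hn : 1 ≤ n) (hw0 : w ≠ 0) (hw : ‖w‖ < 1) (hbc : Contr b) :
    (‖w‖⁻¹)^(2*n) * ‖Vp b n w‖^2 ≤ min 8 (1 / (n * (1 - ‖w‖^2))) := by
  have hn0 : (0:ℝ) < n := by exact_mod_cast hn
  have h0 : 0 < ‖w‖ := norm_pos_iff.2 hw0
  have hd : 0 < 1 - ‖w‖^2 := by nlinarith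
  have h2 := V_bound2 w b b' hb hb' n hn hw0 hw
  refine le_min ?_ h2
  by_cases hc : n * (1 - ‖w‖^2) < 1/2
  · have h1 := V_bound1 b hbc n hn w hw0 hw
    have hB := one_add_mul_le_pow (a := ‖w‖^2 - 1) (by nlinarith) n
    have hp : 1/2 ≤ ‖w‖^(2*n) := by
      rw [pow_mul]
      have : (1 + (‖w‖^2 - 1)) = ‖w‖^2 := by ring
      rw [this] at hB
      nlinarith
    have hq : (‖w‖⁻¹)^(2*n) ≤ 2 := by
      rw [inv_pow]
      exact inv_le_of_inv_le₀ (by norm_num) (by linarith)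
    have hq0 : 0 ≤ (‖w‖⁻¹)^(2*n) := by positivity
    nlinarith
  · push Not at hc
    refine h2.trans ?_
    rw [div_le_iff₀ (by positivity)]
    linarith

lemma coeff_sq (b : PowerSeries ℂ) (hb : Contr b) (J : ℕ) :
    ∑ j ∈ range J, ‖PowerSeries.coeff j b‖^2 ≤ 1 := by
  have := hb 1 J
  rw [mul_one] at this
  refine this.trans ?_
  cases J with
  | zero => simp
  | succ J =>
    rw [sum_range_succ']
    simp [PowerSeries.coeff_one]

lemma V_triv (b : PowerSeries ℂ) (hb : Contr b) (n : ℕ) (w : ℂ) (hw : ‖w‖ ≤ 1) :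
    ‖Vp b n w‖ ≤ 2 * n := by
  unfold Vp
  refine (norm_sum_le _ _).trans ?_
  have : ∀ i ∈ range (2*n), ‖(lam n i : ℂ) * PowerSeries.coeff i b * w^i‖ ≤ 1 := by
    intro i _
    rw [norm_mul, norm_mul, norm_pow, Complex.norm_real, Real.norm_of_nonneg (lam_nonneg n i)]
    have h1 : ‖PowerSeries.coeff i b‖^2 ≤ 1 := by
      refine le_trans ?_ (coeff_sq b hb (i+1))
      exact single_le_sum (f := fun j => ‖PowerSeries.coeff j b‖^2) (fun j _ => by positivity) (by simp)
    have h2 : ‖PowerSeries.coeff i b‖ ≤ 1 := by nlinarith [norm_nonneg (PowerSeries.coeff i b)]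
    refine mul_le_one₀ (mul_le_one₀ (lam_le n i) (norm_nonneg _) h2) (by positivity) (pow_le_one₀ (norm_nonneg _) hw)
  refine (sum_le_sum this).trans ?_
  simp

instance haar_fin : IsFiniteMeasure haarCircle := by
  unfold haarCircle
  have : IsFiniteMeasure ((ENNReal.ofReal (2 * Real.pi))⁻¹ • volume.restrict (Set.Ioc (0 : ℝ) (2 * Real.pi))) := by
    apply Measure.smul_finite
    simp [Real.pi_pos]
  infer_instance

lemma haar_int (f : ℂ → ℝ) (hf : Measurable f) :
    ∫ z, f z ∂haarCircle = (2*Real.pi)⁻¹ * ∫ θ in (0:ℝ)..(2*Real.pi), f (Complex.exp (θ * Complex.I)) := by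
  unfold haarCircle
  rw [integral_map (by fun_prop) hf.aestronglyMeasurable, integral_smul_measure,
    intervalIntegral.integral_of_le (by positivity)]
  simp [Real.pi_pos.le]

lemma int_exp (k : ℤ) : ∫ θ in (0:ℝ)..(2*Real.pi), (Complex.exp (θ * Complex.I))^k
    = if k = 0 then 2 * (Real.pi : ℂ) else 0 := by
  split_ifs with h
  · simp [h]
  · have hk : (k : ℂ) * Complex.I ≠ 0 := by simp [h]
    have : ∀ θ : ℝ, (Complex.exp (θ * Complex.I))^k = Complex.exp ((k * Complex.I) * θ) := by
      intro θ; rw [← Complex.exp_int_mul]; ring_nf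
    simp_rw [this]
    rw [integral_exp_mul_complex hk]
    have : Complex.exp (k * Complex.I * ((2 * Real.pi : ℝ) : ℂ)) = 1 := by
      rw [Complex.exp_eq_one_iff]; exact ⟨k, by push_cast; ring⟩
    rw [this]; simp

lemma R_meas (S : Finset ℤ) (c : ℤ → ℂ) : Measurable fun z : ℂ => ‖∑ j ∈ S, c j * z ^ j‖ ^ 2 := by
  have : ∀ j : ℤ, Measurable fun z : ℂ => z ^ j := fun j => by
    cases j with
    | ofNat m => simp only [Int.ofNat_eq_natCast, zpow_natCast]; fun_prop
    | negSucc m => simp only [zpow_negSucc]; fun_prop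
  exact ((Finset.measurable_fun_sum _ fun j _ => (this j).const_mul _).norm).pow_const 2

lemma parseval (S : Finset ℤ) (c : ℤ → ℂ) :
    ∫ z, ‖∑ j ∈ S, c j * z ^ j‖ ^ 2 ∂haarCircle = ∑ j ∈ S, ‖c j‖^2 := by
  rw [haar_int _ (R_meas S c)]
  have key : ((∫ θ in (0:ℝ)..(2*Real.pi), ‖∑ j ∈ S, c j * (Complex.exp (θ * Complex.I)) ^ j‖ ^ 2 : ℝ) : ℂ)
      = ∑ i ∈ S, ∑ j ∈ S, c i * (starRingEnd ℂ) (c j) * (if i - j = 0 then 2 * (Real.pi : ℂ) else 0) := by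
    rw [← intervalIntegral.integral_ofReal]
    have : ∀ θ : ℝ, ((‖∑ j ∈ S, c j * (Complex.exp (θ * Complex.I)) ^ j‖ ^ 2 : ℝ) : ℂ)
        = ∑ i ∈ S, ∑ j ∈ S, c i * (starRingEnd ℂ) (c j) * (Complex.exp (θ * Complex.I)) ^ (i - j) := by
      intro θ
      rw [Complex.ofReal_pow, ← Complex.mul_conj', map_sum, sum_mul_sum]
      refine sum_congr rfl fun i _ => sum_congr rfl fun j _ => ?_
      rw [map_mul, map_zpow₀, ← Complex.exp_conj, zpow_sub₀ (Complex.exp_ne_zero _)]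
      simp only [map_mul, Complex.conj_ofReal, Complex.conj_I, mul_neg, Complex.exp_neg, inv_zpow]
      rw [div_eq_mul_inv]; ring
    simp_rw [this]
    have hcont : ∀ k : ℤ, Continuous fun θ : ℝ => (Complex.exp (θ * Complex.I)) ^ k := by
      intro k
      exact Continuous.zpow₀ (by fun_prop) _ (fun θ => Or.inl (Complex.exp_ne_zero _))
    rw [intervalIntegral.integral_finsetSum]
    · refine sum_congr rfl fun i _ => ?_
      rw [intervalIntegral.integral_finsetSum]
      · refine sum_congr rfl fun j _ => ?_
        rw [intervalIntegral.integral_const_mul, int_exp]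
      · intro j _
        exact ((hcont _).const_mul _).intervalIntegrable _ _
    · intro i _
      exact (continuous_finsetSum _ fun j _ => (hcont _).const_mul _).intervalIntegrable _ _
  have key2 : ((∫ θ in (0:ℝ)..(2*Real.pi), ‖∑ j ∈ S, c j * (Complex.exp (θ * Complex.I)) ^ j‖ ^ 2 : ℝ))
      = 2 * Real.pi * ∑ j ∈ S, ‖c j‖^2 := by
    apply Complex.ofReal_injective
    rw [key]
    push_cast
    rw [mul_sum]
    refine sum_congr rfl fun i hi => ?_
    rw [sum_eq_single_of_mem i hi]
    · simp [Complex.mul_conj']; ring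
    · intro j _ hj
      rw [if_neg (by omega), mul_zero]
  rw [key2]
  have := Real.pi_pos
  field_simp

lemma R_bdd (S : Finset ℤ) (c : ℤ → ℂ) (Z : ℝ) : ∃ M, ∀ z : ℂ, 1 ≤ ‖z‖ → ‖z‖ ≤ Z →
    ‖∑ j ∈ S, c j * z ^ j‖ ^ 2 ≤ M := by
  refine ⟨(∑ j ∈ S, ‖c j‖ * Z ^ |j|) ^ 2, fun z h1 h2 => ?_⟩
  gcongr
  refine norm_sum_le_of_le _ fun j _ => ?_
  rw [norm_mul, norm_zpow]
  gcongr
  refine (zpow_le_zpow_right₀ h1 (le_abs_self j)).trans ?_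
  exact zpow_le_zpow_left₀ (abs_nonneg j) (by linarith) h2

lemma total_int (z : ℕ → ℂ) (hz : ∀ k, 1 < ‖z k‖) (Z : ℝ) (hZ : ∀ k, ‖z k‖ ≤ Z)
    (μk : ℕ → ℝ) (hμk : ∀ k, 0 < μk k) (hμs : Summable μk) (S : Finset ℤ) (c : ℤ → ℂ) :
    Summable (fun k => μk k * ‖∑ j ∈ S, c j * z k ^ j‖ ^ 2) ∧
    ∫ x, ‖∑ j ∈ S, c j * x ^ j‖ ^ 2 ∂(haarCircle +
          Measure.sum (fun k => ENNReal.ofReal (μk k) • Measure.dirac (z k)))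
      = ∑ j ∈ S, ‖c j‖^2 + ∑' k, μk k * ‖∑ j ∈ S, c j * z k ^ j‖ ^ 2 := by
  obtain ⟨M, hM⟩ := R_bdd S c (max 1 Z)
  have hm := R_meas S c
  have hs : Summable (fun k => μk k * ‖∑ j ∈ S, c j * z k ^ j‖ ^ 2) := by
    refine Summable.of_nonneg_of_le (fun k => ?_) (fun k => ?_) (hμs.mul_right M)
    · have := hμk k; positivity
    · exact mul_le_mul_of_nonneg_left (hM _ (hz k).le ((hZ k).trans (le_max_right _ _))) (hμk k).le
  refine ⟨hs, ?_⟩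
  have i1 : Integrable (fun x : ℂ => ‖∑ j ∈ S, c j * x ^ j‖ ^ 2) haarCircle := by
    refine Integrable.of_bound hm.aestronglyMeasurable M ?_
    unfold haarCircle
    rw [ae_map_iff (by fun_prop) (measurableSet_le hm.norm measurable_const)]
    refine ae_of_all _ fun θ => ?_
    rw [Real.norm_of_nonneg (by positivity)]
    apply hM <;> simp [Complex.norm_exp_ofReal_mul_I]
  have i2 : Integrable (fun x : ℂ => ‖∑ j ∈ S, c j * x ^ j‖ ^ 2)
      (Measure.sum (fun k => ENNReal.ofReal (μk k) • Measure.dirac (z k))) := by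
    refine integrable_sum_measure (fun k => ?_) ?_
    · exact (integrable_dirac (by simp)).smul_measure (by simp)
    · simpa [integral_smul_measure, ENNReal.toReal_ofReal (hμk _).le] using hs
  rw [integral_add_measure i1 i2, integral_sum_measure i2, parseval]
  simp [integral_smul_measure, ENNReal.toReal_ofReal (hμk _).le]

noncomputable def cs (b : PowerSeries ℂ) (n : ℕ) (s : ℝ) (j : ℤ) : ℂ :=
  s * ((lam n (n - j).toNat : ℂ) * PowerSeries.coeff (n - j).toNat b)

lemma reindex {E : Type*} [AddCommMonoid E] (n : ℕ) (g : ℤ → E) :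
    ∑ j ∈ Finset.Icc (-(n : ℤ) + 1) (n : ℤ), g j = ∑ i ∈ range (2*n), g (n - i) := by
  refine sum_nbij' (fun j => (n - j).toNat) (fun i => (n:ℤ) - i) ?_ ?_ ?_ ?_ ?_
  · intro j hj; simp only [mem_Icc, mem_range] at *; omega
  · intro j hj; simp only [mem_Icc, mem_range] at *; omega
  · intro j hj; simp only [mem_Icc] at *; omega
  · intro j hj; simp only [mem_range] at *; omega
  · intro j hj; simp only [mem_Icc] at *; congr 1; omega

lemma cs_norm (b : PowerSeries ℂ) (hb : Contr b) (n : ℕ) (s : ℝ) :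
    ∑ j ∈ Finset.Icc (-(n : ℤ) + 1) (n : ℤ), ‖cs b n s j‖^2 ≤ s^2 := by
  rw [reindex]
  have : ∀ i ∈ range (2*n), ‖cs b n s (n - i)‖^2 ≤ s^2 * ‖PowerSeries.coeff i b‖^2 := by
    intro i _
    have e : ((n:ℤ) - (n - i)).toNat = i := by omega
    rw [cs, e, norm_mul, norm_mul, Complex.norm_real, Complex.norm_real,
      Real.norm_of_nonneg (lam_nonneg n i), mul_pow, mul_pow, Real.norm_eq_abs, sq_abs]
    have : lam n i ^ 2 ≤ 1 := pow_le_one₀ (lam_nonneg n i) (lam_le n i)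
    gcongr
    exact mul_le_of_le_one_left (by positivity) this
  refine (sum_le_sum this).trans ?_
  rw [← mul_sum]
  exact mul_le_of_le_one_right (by positivity) (coeff_sq b hb _)

lemma cs_eval (b : PowerSeries ℂ) (n : ℕ) (s : ℝ) (z : ℂ) (hz : z ≠ 0) :
    ‖∑ j ∈ Finset.Icc (-(n : ℤ) + 1) (n : ℤ), cs b n s j * z ^ j‖^2
      = s^2 * (‖z‖^(2*n) * ‖Vp b n z⁻¹‖^2) := by
  have : ∑ j ∈ Finset.Icc (-(n : ℤ) + 1) (n : ℤ), cs b n s j * z ^ j = s * (z^n * Vp b n z⁻¹) := by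
    rw [reindex, Vp, mul_sum, mul_sum]
    refine sum_congr rfl fun i _ => ?_
    have e : ((n:ℤ) - (n - i)).toNat = i := by omega
    rw [cs, e, zpow_sub₀ hz, zpow_natCast, zpow_natCast, inv_pow]
    field_simp
  rw [this, norm_mul, norm_mul, norm_pow, Complex.norm_real, mul_pow, mul_pow, Real.norm_eq_abs, sq_abs]
  ring

lemma eta_bdd (z : ℕ → ℂ) (hz : ∀ k, 1 < ‖z k‖) (Z : ℝ) (hZ : ∀ k, ‖z k‖ ≤ Z)
    (μk : ℕ → ℝ) (hμk : ∀ k, 0 < μk k) (hμs : Summable μk) (n : ℕ) (hn : 1 ≤ n) (c : ℤ → ℂ)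
    (h : (∫ x : ℂ, ‖∑ j ∈ Finset.Icc (-(n : ℤ) + 1) (n : ℤ), c j * x ^ j‖ ^ 2 ∂(haarCircle +
          Measure.sum (fun k => ENNReal.ofReal (μk k) • Measure.dirac (z k)))) ≤ 1) :
    ‖c n‖ ≤ 1 := by
  rw [(total_int z hz Z hZ μk hμk hμs _ c).2] at h
  have h1 : 0 ≤ ∑' k, μk k * ‖∑ j ∈ Finset.Icc (-(n : ℤ) + 1) (n : ℤ), c j * z k ^ j‖ ^ 2 :=
    tsum_nonneg fun k => by have := hμk k; positivity
  have h2 : ‖c n‖^2 ≤ ∑ j ∈ Finset.Icc (-(n : ℤ) + 1) (n : ℤ), ‖c j‖^2 :=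
    single_le_sum (f := fun j => ‖c j‖^2) (fun j _ => by positivity) (by simp; omega)
  nlinarith [norm_nonneg (c n)]

noncomputable def epsK (z : ℕ → ℂ) (μk : ℕ → ℝ) (n k : ℕ) : ℝ :=
  μk k * min 8 (1 / (n * (1 - ‖(z k)⁻¹‖^2)))

lemma inv_lt (x : ℂ) (h : 1 < ‖x‖) : ‖x⁻¹‖ < 1 := by
  rw [norm_inv]; exact inv_lt_one_of_one_lt₀ h

lemma den_pos (x : ℂ) (h : 1 < ‖x‖) : 0 < 1 - ‖x⁻¹‖^2 := by
  have := inv_lt x h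
  nlinarith [norm_nonneg x⁻¹]

lemma epsK_nonneg (z : ℕ → ℂ) (hz : ∀ k, 1 < ‖z k‖) (μk : ℕ → ℝ) (hμk : ∀ k, 0 < μk k) (n k : ℕ) :
    0 ≤ epsK z μk n k := by
  have := den_pos _ (hz k)
  have := hμk k
  unfold epsK; positivity

lemma epsK_le (z : ℕ → ℂ) (μk : ℕ → ℝ) (hμk : ∀ k, 0 < μk k) (n k : ℕ) :
    epsK z μk n k ≤ μk k * 8 :=
  mul_le_mul_of_nonneg_left (min_le_left _ _) (hμk k).le

lemma eps_tendsto (z : ℕ → ℂ) (hz : ∀ k, 1 < ‖z k‖) (μk : ℕ → ℝ) (hμk : ∀ k, 0 < μk k)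
    (hμs : Summable μk) : Tendsto (fun n => ∑' k, epsK z μk n k) atTop (nhds 0) := by
  have := tendsto_tsum_of_dominated_convergence (𝓕 := atTop) (f := fun n k => epsK z μk n k)
    (g := fun _ => (0:ℝ)) (hμs.mul_right 8) ?_ ?_
  · simpa using this
  · intro k
    have hd := den_pos _ (hz k)
    have h1 : Tendsto (fun n : ℕ => 1 / ((n:ℝ) * (1 - ‖(z k)⁻¹‖^2))) atTop (nhds 0) := by
      simp only [one_div]
      exact (tendsto_natCast_atTop_atTop.atTop_mul_const hd).inv_tendsto_atTop
    have h2 := ((tendsto_const_nhds (x := (8:ℝ))).min h1).const_mul (μk k)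
    simpa [epsK] using h2
  · refine Eventually.of_forall fun n k => ?_
    rw [Real.norm_of_nonneg (epsK_nonneg z hz μk hμk n k)]
    exact epsK_le z μk hμk n k

lemma sum_bound (z : ℕ → ℂ) (hz : ∀ k, 1 < ‖z k‖) (Z : ℝ) (hZ : ∀ k, ‖z k‖ ≤ Z)
    (μk : ℕ → ℝ) (hμk : ∀ k, 0 < μk k) (hμs : Summable μk) (n : ℕ) (hn : 1 ≤ n) :
    ∃ N : ℕ, ∑' k, μk k * (‖z k‖^(2*n) * ‖Vp (∏ k ∈ range N, fac (z k)⁻¹) n (z k)⁻¹‖^2)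
      ≤ ∑' k, epsK z μk n k + 1 / n := by
  have hn0 : (0:ℝ) < n := by exact_mod_cast hn
  have hZ1 : 1 < Z := (hz 0).trans_le (hZ 0)
  set M : ℝ := Z^(2*n) * (2*n)^2 with hM
  have hM0 : 0 < M := by positivity
  obtain ⟨N, hN⟩ := ((tendsto_sum_nat_add μk).eventually_lt_const
    (show (0:ℝ) < 1 / n / M by positivity)).exists
  refine ⟨N, ?_⟩
  have hw : ∀ k, ‖(z k)⁻¹‖ < 1 := fun k => inv_lt _ (hz k)
  have hw0 : ∀ k, (z k)⁻¹ ≠ 0 := fun k => inv_ne_zero (norm_pos_iff.1 (by linarith [hz k]))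
  set b := ∏ k ∈ range N, fac (z k)⁻¹ with hb
  have hbc : Contr b := prod_contr (fun k => (z k)⁻¹) hw _
  set G : ℕ → ℝ := fun k => μk k * (‖z k‖^(2*n) * ‖Vp b n (z k)⁻¹‖^2) with hG
  have g2 : ∀ k, G k ≤ μk k * M := by
    intro k
    have h1 := V_triv b hbc n _ (hw k).le
    have h2 := hZ k
    have := (hμk k).le
    simp only [hG, hM]
    gcongr
  have g0 : ∀ k, 0 ≤ G k := fun k => by have := hμk k; simp only [hG]; positivity
  have hGs : Summable G := Summable.of_nonneg_of_le g0 g2 (hμs.mul_right M)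
  have g1 : ∀ k ∈ range N, G k ≤ epsK z μk n k := by
    intro k hk
    refine mul_le_mul_of_nonneg_left ?_ (hμk k).le
    have := V_bound3 (z k)⁻¹ b (∏ k ∈ (range N).erase k, fac (z k)⁻¹) (mul_prod_erase _ _ hk).symm
      (prod_contr (fun k => (z k)⁻¹) hw _) n hn (hw0 k) (hw k) hbc
    rwa [norm_inv, inv_inv, ← norm_inv] at this
  have hes : Summable (epsK z μk n) := Summable.of_nonneg_of_le (epsK_nonneg z hz μk hμk n)
    (epsK_le z μk hμk n) (hμs.mul_right 8)
  rw [← hGs.sum_add_tsum_nat_add N]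
  have a1 : ∑ k ∈ range N, G k ≤ ∑' k, epsK z μk n k :=
    (sum_le_sum g1).trans (hes.sum_le_tsum _ fun k _ => epsK_nonneg z hz μk hμk n k)
  have a2 : ∑' k, G (k + N) ≤ 1 / n := by
    have t : ∑' k, G (k + N) ≤ ∑' k, μk (k + N) * M :=
      Summable.tsum_le_tsum (fun k => g2 _) ((summable_nat_add_iff N).2 hGs)
        (((summable_nat_add_iff N).2 hμs).mul_right M)
    rw [tsum_mul_right] at t
    rw [lt_div_iff₀ hM0] at hN
    linarith
  linarith

lemma prod_bound (z : ℕ → ℂ) (hz : ∀ k, 1 < ‖z k‖) (hblaschke : Summable (fun k => ‖z k‖ - 1)) (N : ℕ) :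
    (∏' k, ‖z k‖⁻¹) ≤ ∏ k ∈ range N, ‖z k‖⁻¹ := by
  have hinv : ∀ k, 0 < ‖z k‖⁻¹ ∧ ‖z k‖⁻¹ ≤ 1 := fun k =>
    ⟨inv_pos.2 (by linarith [hz k]), (inv_lt_one_of_one_lt₀ (hz k)).le⟩
  have hm : Multipliable (fun k => ‖z k‖⁻¹) := by
    have := multipliable_one_add_of_summable (f := fun k => ‖z k‖⁻¹ - 1) ?_
    · simpa using this
    · refine Summable.of_nonneg_of_le (fun k => norm_nonneg _) (fun k => ?_) hblaschke
      rw [Real.norm_eq_abs, abs_le]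
      have h1 := hz k
      have h2 : ‖z k‖ * ‖z k‖⁻¹ = 1 := mul_inv_cancel₀ (by linarith)
      have := hinv k
      constructor <;> nlinarith
  have ha : Antitone (fun N => ∏ k ∈ range N, ‖z k‖⁻¹) := by
    refine antitone_nat_of_succ_le fun N => ?_
    rw [prod_range_succ]
    exact mul_le_of_le_one_right (prod_nonneg fun k _ => (hinv k).1.le) (hinv N).2
  exact ha.le_of_tendsto hm.hasProd.tendsto_prod_nat N

lemma coeff_zero_prod (z : ℕ → ℂ) (N : ℕ) :
    ‖PowerSeries.coeff 0 (∏ k ∈ range N, fac (z k)⁻¹)‖ = ∏ k ∈ range N, ‖z k‖⁻¹ := by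
  rw [PowerSeries.coeff_zero_eq_constantCoeff_apply, map_prod, norm_prod]
  refine prod_congr rfl fun k _ => ?_
  have h : PowerSeries.constantCoeff (pinv (z k)⁻¹) = 1 := by
    rw [← PowerSeries.coeff_zero_eq_constantCoeff_apply, pinv, PowerSeries.coeff_mk, pow_zero]
  simp [fac, h]

/-- Lower estimate for `η_n` in the case of weight `w ≡ 1`:
`liminf η_n ≥ B(0) = ∏ |z_k|⁻¹`. -/
theorem eta_liminf (z : ℕ → ℂ) (hz : ∀ k, 1 < ‖z k‖)
    (hblaschke : Summable (fun k => ‖z k‖ - 1))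
    (μk : ℕ → ℝ) (hμk : ∀ k, 0 < μk k) (hμs : Summable μk) :
    (∏' k, ‖z k‖⁻¹) ≤
      liminf
        (etaSeq (haarCircle +
          Measure.sum (fun k => ENNReal.ofReal (μk k) • Measure.dirac (z k))))
        atTop := by
  set Z := 1 + ∑' k, (‖z k‖ - 1) with hZd
  have hZ : ∀ k, ‖z k‖ ≤ Z := fun k => by
    have := hblaschke.le_tsum k (fun j _ => by linarith [hz j])
    linarith
  set β := ∏' k, ‖z k‖⁻¹ with hβ
  set ν := haarCircle + Measure.sum (fun k => ENNReal.ofReal (μk k) • Measure.dirac (z k)) with hν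
  have hub : ∀ n : ℕ, 1 ≤ n → 1 ∈ upperBounds { x : ℝ | ∃ c : ℤ → ℂ,
    (∫ z : ℂ, ‖∑ j ∈ Finset.Icc (-(n : ℤ) + 1) (n : ℤ), c j * z ^ j‖ ^ 2 ∂ν) ≤ 1 ∧
    x = ‖c (n : ℤ)‖ } := by
    rintro n hn x ⟨c, hc, rfl⟩
    exact eta_bdd z hz Z hZ μk hμk hμs n hn c hc
  set g : ℕ → ℝ := fun n => (Real.sqrt (1 + (∑' k, epsK z μk n k + 1 / n)))⁻¹ * β with hg
  have hgl : Tendsto g atTop (nhds β) := by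
    have h1 := (eps_tendsto z hz μk hμk hμs).add (tendsto_one_div_atTop_nhds_zero_nat (𝕜 := ℝ))
    have h2 := (((h1.const_add 1).sqrt).inv₀ (by simp)).mul_const β
    simpa [hg] using h2
  have hle : ∀ n : ℕ, 1 ≤ n → g n ≤ etaSeq ν n := by
    intro n hn
    have hn0 : (0:ℝ) < n := by exact_mod_cast hn
    obtain ⟨N, hN⟩ := sum_bound z hz Z hZ μk hμk hμs n hn
    set b := ∏ k ∈ range N, fac (z k)⁻¹ with hb
    have hbc : Contr b := prod_contr (fun k => (z k)⁻¹) (fun k => inv_lt _ (hz k)) _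
    set e := ∑' k, epsK z μk n k + 1 / n with he
    have he0 : 0 ≤ e := add_nonneg (tsum_nonneg (epsK_nonneg z hz μk hμk n)) (by positivity)
    set s := (Real.sqrt (1 + e))⁻¹ with hs
    have hs0 : 0 < s := by positivity
    have hs2 : s^2 * (1 + e) = 1 := by
      rw [hs, inv_pow, Real.sq_sqrt (by positivity)]
      exact inv_mul_cancel₀ (by positivity)
    have hmem : ‖cs b n s n‖ ≤ etaSeq ν n := by
      refine le_csSup ⟨1, hub n hn⟩ ⟨cs b n s, ?_, rfl⟩
      rw [hν, (total_int z hz Z hZ μk hμk hμs _ _).2]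
      have h1 := cs_norm b hbc n s
      have h2 : ∑' k, μk k * ‖∑ j ∈ Finset.Icc (-(n : ℤ) + 1) (n : ℤ), cs b n s j * z k ^ j‖ ^ 2
          = s^2 * ∑' k, μk k * (‖z k‖^(2*n) * ‖Vp b n (z k)⁻¹‖^2) := by
        rw [← tsum_mul_left]
        refine tsum_congr fun k => ?_
        rw [cs_eval _ _ _ _ (norm_pos_iff.1 (by linarith [hz k]))]
        ring
      rw [h2]
      have h3 := mul_le_mul_of_nonneg_left hN (sq_nonneg s)
      nlinarith
    refine le_trans ?_ hmem
    have hc : ‖cs b n s n‖ = s * ∏ k ∈ range N, ‖z k‖⁻¹ := by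
      rw [← coeff_zero_prod]
      simp only [cs, sub_self, Int.toNat_zero, lam_zero n hn, norm_mul, Complex.norm_real,
        Complex.ofReal_one, one_mul, Real.norm_of_nonneg hs0.le]
      rw [hb]
    rw [hc]
    exact mul_le_mul_of_nonneg_left (prod_bound z hz hblaschke N) hs0.le
  have hb1 : ∀ n : ℕ, 1 ≤ n → etaSeq ν n ≤ 1 := fun n hn =>
    csSup_le ⟨0, 0, by simp, by simp⟩ (hub n hn)
  rw [← hgl.liminf_eq]
  refine liminf_le_liminf ?_ hgl.isBoundedUnder_ge ?_
  · filter_upwards [eventually_ge_atTop 1] with n hn using hle n hn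
  · refine IsBoundedUnder.isCoboundedUnder_ge ⟨1, ?_⟩
    rw [eventually_map]
    filter_upwards [eventually_ge_atTop 1] with n hn using hb1 n hn
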